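/- Let 𝒯 be a pretriangulated category with all set-indexed coproducts, equipped with a Bousfield localization datum (L, η). Let T be a set of objects of 𝒯, let τ be the smallest localizing subcategory containing T, and assume L Y ∈ τ for every Y ∈ τ. Let τ^L denote the smallest localizing subcategory containing {L Y : Y ∈ T}. Let X be a local object, and suppose given distinguished triangles A → X → B → A⟦1⟧ with A ∈ τ and B ∈ τ⊥, and A' → X → B' → A'⟦1⟧ with A' ∈ τ^L and B' ∈ (τ^L)⊥. Then A is isomorphic to A' over X, and both A and B are local. (In the paper's notation: for a local spectrum X, P_τ X and P^{τ⊥} X are local.) -/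

import Mathlib

/-!
Local objects are exactly those isomorphic to some `L.obj Y` (`isIso_iff_nonempty`). Hence they
form a localizing subcategory (`isLocalizing_local`): since `η` is natural, a morphism between
local objects is isomorphic, as an arrow, to its image under `L`, so its cone `Z` is isomorphic
to `L.obj Z`. No compatibility of `η` with the shift is needed, because being local only depends
on the isomorphism class.

It follows that `A'`, and so `B'`, is local. The objects `Y` with `L.obj Y ∈ τ^L` form a
localizing subcategory (`isLocalizing_preimage`) containing `T`, hence containing `τ`; any map
from `Y ∈ τ` to the local object `B'` factors through `L.obj Y ∈ τ^L` and therefore vanishes.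
So `B' ∈ τ⊥`, while `A' ∈ τ` because `τ` is closed under `L`. Both triangles are thus
decompositions of `X` with respect to `(τ, τ⊥)`, and such a decomposition is unique up to
isomorphism (`exists_iso_of_orthogonal`). Hence `A ≅ A'` is local, and so is the cone `B` of
`A ⟶ X`.
-/

open CategoryTheory Limits Pretriangulated ZeroObject

universe w v u

variable {𝒯 : Type u} [Category.{v} 𝒯] [HasZeroObject 𝒯] [Preadditive 𝒯]
  [HasShift 𝒯 ℤ] [∀ n : ℤ, (shiftFunctor 𝒯 n).Additive] [Pretriangulated 𝒯]
  [HasCoproducts.{w} 𝒯]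

/-- A localizing subcategory: a nonempty class of objects, closed under isomorphisms,
cones, extensions, and all set-indexed coproducts. -/
def IsLocalizing (S : Set 𝒯) : Prop :=
  S.Nonempty ∧
  (∀ ⦃X Y : 𝒯⦄, (X ≅ Y) → X ∈ S → Y ∈ S) ∧
  (∀ T : Triangle 𝒯, (T ∈ distTriang 𝒯) → T.obj₁ ∈ S → T.obj₂ ∈ S → T.obj₃ ∈ S) ∧
  (∀ T : Triangle 𝒯, (T ∈ distTriang 𝒯) → T.obj₁ ∈ S → T.obj₃ ∈ S → T.obj₂ ∈ S) ∧
  (∀ {ι : Type w} (f : ι → 𝒯), (∀ i, f i ∈ S) → (∐ f) ∈ S)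

/-- The smallest localizing subcategory containing a set of objects `T`. -/
def smallestLocalizing (T : Set 𝒯) : Set 𝒯 :=
  {X | ∀ S : Set 𝒯, IsLocalizing.{w} S → T ⊆ S → X ∈ S}

/-- The right orthogonal of a class of objects. -/
def rightOrthogonal (S : Set 𝒯) : Set 𝒯 :=
  {X | ∀ Y ∈ S, ∀ f : Y ⟶ X, f = 0}

theorem isLocalizing_smallestLocalizing (T : Set 𝒯) :
    IsLocalizing.{w} (smallestLocalizing.{w} T) := by
  refine ⟨⟨0, ?_⟩, ?_, ?_, ?_, ?_⟩
  · intro S hS _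
    obtain ⟨Y, hY⟩ := hS.1
    exact hS.2.2.1 _ (contractible_distinguished Y) hY hY
  · exact fun X Y e hX S hS hT => hS.2.1 e (hX S hS hT)
  · exact fun D hD h₁ h₂ S hS hT => hS.2.2.1 D hD (h₁ S hS hT) (h₂ S hS hT)
  · exact fun D hD h₁ h₃ S hS hT => hS.2.2.2.1 D hD (h₁ S hS hT) (h₃ S hS hT)
  · exact fun F hF S hS hT => hS.2.2.2.2 F fun i => hF i S hS hT

theorem subset_smallestLocalizing (T : Set 𝒯) : T ⊆ smallestLocalizing.{w} T :=
  fun _ hY _ _ hT => hT hY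

theorem IsLocalizing.zero_mem {S : Set 𝒯} (hS : IsLocalizing.{w} S) : (0 : 𝒯) ∈ S := by
  obtain ⟨Y, hY⟩ := hS.1
  exact hS.2.2.1 _ (contractible_distinguished Y) hY hY

theorem IsLocalizing.shift_mem {S : Set 𝒯} (hS : IsLocalizing.{w} S) {Y : 𝒯} (hY : Y ∈ S) :
    Y⟦(1 : ℤ)⟧ ∈ S :=
  -- `Y⟦1⟧` is the cone of `Y ⟶ 0`.
  hS.2.2.1 _ (rot_of_distTriang _ (contractible_distinguished Y)) hY hS.zero_mem

/-- The preimage of a localizing subcategory under a coproduct-preserving triangulated functor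
is localizing. -/
theorem isLocalizing_preimage (L : 𝒯 ⥤ 𝒯) [L.CommShift ℤ] [L.IsTriangulated]
    [∀ ι : Type w, PreservesColimitsOfShape (Discrete ι) L]
    {S : Set 𝒯} (hS : IsLocalizing.{w} S) : IsLocalizing.{w} (L.obj ⁻¹' S) := by
  refine ⟨⟨0, ?_⟩, ?_, ?_, ?_, ?_⟩
  · exact hS.2.1 L.mapZeroObject.symm hS.zero_mem
  · exact fun X Y e hX => hS.2.1 (L.mapIso e) hX
  · exact fun D hD h₁ h₂ => hS.2.2.1 _ (L.map_distinguished D hD) h₁ h₂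
  · exact fun D hD h₁ h₃ => hS.2.2.2.1 _ (L.map_distinguished D hD) h₁ h₃
  · exact fun F hF => hS.2.1 (PreservesCoproduct.iso L F).symm (hS.2.2.2.2 _ hF)

/-- A map `A ⟶ X` with `A ∈ S` lifts to `A'` as soon as the cone `B'` of `A' ⟶ X` lies in `S⊥`,
and it lifts uniquely. -/
theorem existsUnique_lift {S : Set 𝒯} (hS : IsLocalizing.{w} S)
    {X A A' B' : 𝒯} (f : A ⟶ X) {f' : A' ⟶ X} {g' : X ⟶ B'} {h' : B' ⟶ A'⟦(1 : ℤ)⟧}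
    (hdist' : Triangle.mk f' g' h' ∈ distTriang 𝒯) (hA : A ∈ S)
    (hB' : B' ∈ rightOrthogonal S) : ∃! φ : A ⟶ A', φ ≫ f' = f := by
  obtain ⟨φ, hφ⟩ : ∃ φ : A ⟶ A', f = φ ≫ f' :=
    Triangle.coyoneda_exact₂ _ hdist' f (hB' A hA _)
  refine ⟨φ, hφ.symm, fun ψ hψ => ?_⟩
  have hψ : ψ ≫ f' = f := hψ
  -- The difference of two lifts, shifted once, factors through a map `A⟦1⟧ ⟶ B'`.
  obtain ⟨k, hk⟩ : ∃ k : A⟦(1 : ℤ)⟧ ⟶ B', (ψ - φ)⟦(1 : ℤ)⟧' = k ≫ h' :=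
    Triangle.coyoneda_exact₁ _ hdist' ((ψ - φ)⟦(1 : ℤ)⟧') (by
      change (shiftFunctor 𝒯 (1 : ℤ)).map (ψ - φ) ≫ (shiftFunctor 𝒯 (1 : ℤ)).map f' = 0
      rw [← Functor.map_comp, Preadditive.sub_comp, hψ, ← hφ, sub_self, Functor.map_zero])
  rw [hB' _ (hS.shift_mem hA) k, zero_comp] at hk
  rw [← sub_eq_zero]
  exact (shiftFunctor 𝒯 (1 : ℤ)).map_injective (by rw [hk, Functor.map_zero])

/-- The decomposition of an object with respect to `(S, S⊥)` is unique up to isomorphism. -/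
theorem exists_iso_of_orthogonal {S : Set 𝒯} (hS : IsLocalizing.{w} S) {X A B A' B' : 𝒯}
    {f : A ⟶ X} {g : X ⟶ B} {h : B ⟶ A⟦(1 : ℤ)⟧} (hdist : Triangle.mk f g h ∈ distTriang 𝒯)
    {f' : A' ⟶ X} {g' : X ⟶ B'} {h' : B' ⟶ A'⟦(1 : ℤ)⟧}
    (hdist' : Triangle.mk f' g' h' ∈ distTriang 𝒯)
    (hA : A ∈ S) (hA' : A' ∈ S) (hB : B ∈ rightOrthogonal S) (hB' : B' ∈ rightOrthogonal S) :
    ∃ φ : A ≅ A', φ.hom ≫ f' = f := by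
  obtain ⟨φ, hφ, -⟩ := existsUnique_lift hS f hdist' hA hB'
  obtain ⟨ψ, hψ, -⟩ := existsUnique_lift hS f' hdist hA' hB
  refine ⟨⟨φ, ψ, ?_, ?_⟩, hφ⟩
  · exact (existsUnique_lift hS f hdist hA hB).unique (by rw [Category.assoc, hψ, hφ])
      (Category.id_comp f)
  · exact (existsUnique_lift hS f' hdist' hA' hB').unique (by rw [Category.assoc, hφ, hψ])
      (Category.id_comp f')

set_option linter.unusedSectionVars false in
/-- When every `L.obj Y` is local, the local objects are those isomorphic to their own image
under `L`, by any isomorphism whatsoever. -/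
theorem isIso_iff_nonempty {L : 𝒯 ⥤ 𝒯} {η : 𝟭 𝒯 ⟶ L}
    (hLlocal : ∀ X : 𝒯, IsIso (η.app (L.obj X))) (Z : 𝒯) :
    IsIso (η.app Z) ↔ Nonempty (Z ≅ L.obj Z) := by
  refine ⟨fun _ => ⟨asIso (η.app Z)⟩, fun ⟨e⟩ => ?_⟩
  have := hLlocal Z
  have h : η.app Z = e.hom ≫ η.app (L.obj Z) ≫ L.map e.inv := by
    rw [← η.naturality e.inv]
    simp
  rw [h]
  infer_instance

theorem isLocalizing_local {L : 𝒯 ⥤ 𝒯} [L.CommShift ℤ] [L.IsTriangulated]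
    [∀ ι : Type w, PreservesColimitsOfShape (Discrete ι) L] {η : 𝟭 𝒯 ⟶ L}
    (hLlocal : ∀ X : 𝒯, IsIso (η.app (L.obj X))) :
    IsLocalizing.{w} {Z : 𝒯 | IsIso (η.app Z)} := by
  have key := isIso_iff_nonempty hLlocal
  have cone : ∀ D : Triangle 𝒯, (D ∈ distTriang 𝒯) → IsIso (η.app D.obj₁) →
      IsIso (η.app D.obj₂) → IsIso (η.app D.obj₃) := by
    intro D hD h₁ h₂
    rw [key]
    exact ⟨Triangle.π₃.mapIso (isoTriangleOfIso₁₂ D (L.mapTriangle.obj D) hD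
      (L.map_distinguished D hD) (@asIso _ _ _ _ _ h₁) (@asIso _ _ _ _ _ h₂)
      (η.naturality D.mor₁))⟩
  refine ⟨⟨L.obj 0, hLlocal 0⟩, ?_, cone, ?_, ?_⟩
  · intro X Y e hX
    obtain ⟨i⟩ := (key X).1 hX
    exact (key Y).2 ⟨e.symm ≪≫ i ≪≫ L.mapIso e⟩
  · intro D hD h₁ h₃
    -- `D.obj₂⟦1⟧` is the cone of `D.obj₃ ⟶ D.obj₁⟦1⟧`.
    obtain ⟨i⟩ := (key _).1 h₁
    have h₁' : IsIso (η.app (D.obj₁⟦(1 : ℤ)⟧)) := (key _).2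
      ⟨(shiftFunctor 𝒯 (1 : ℤ)).mapIso i ≪≫ ((L.commShiftIso (1 : ℤ)).app D.obj₁).symm⟩
    have h₂ : IsIso (η.app (D.obj₂⟦(1 : ℤ)⟧)) :=
      cone _ (rot_of_distTriang _ (rot_of_distTriang _ hD)) h₃ h₁'
    obtain ⟨j⟩ := (key _).1 h₂
    exact (key _).2 ⟨(shiftFunctor 𝒯 (1 : ℤ)).preimageIso
      (j ≪≫ (L.commShiftIso (1 : ℤ)).app D.obj₂)⟩
  · intro ι F hF
    have : ∀ i, IsIso (η.app (F i)) := hF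
    exact (key _).2 ⟨Sigma.mapIso (fun i => asIso (η.app (F i))) ≪≫
      (PreservesCoproduct.iso L F).symm⟩

/-- for a local object `X`, the pieces `P_τ X` and `P^{τ⊥} X` of the
localization triangle of `X` with respect to `τ` are local, and `P_τ X` agrees with
`P_{τ^L} X`. -/
theorem stmt7
    -- a Bousfield localization datum `(L, η)`:
    (L : 𝒯 ⥤ 𝒯) [L.CommShift ℤ] [L.IsTriangulated]
    [∀ ι : Type w, PreservesColimitsOfShape (Discrete ι) L]
    (η : 𝟭 𝒯 ⟶ L)
    (hLlocal : ∀ X : 𝒯, IsIso (η.app (L.obj X)))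
    (huniv : ∀ Z Y : 𝒯, IsIso (η.app Z) →
      Function.Bijective (fun g : L.obj Y ⟶ Z => η.app Y ≫ g))
    -- `T` a set of objects, `τ` the localizing subcategory it generates, closed under `L`:
    (T : Set 𝒯)
    (hclosed : ∀ Y ∈ smallestLocalizing.{w} T, L.obj Y ∈ smallestLocalizing.{w} T)
    -- a local object `X`:
    (X : 𝒯) (hX : IsIso (η.app X))
    -- a distinguished triangle `A → X → B → A⟦1⟧` with `A ∈ τ` and `B ∈ τ⊥`:
    (A B : 𝒯) (f : A ⟶ X) (g : X ⟶ B) (h : B ⟶ A⟦(1 : ℤ)⟧)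
    (hdist : Triangle.mk f g h ∈ distTriang 𝒯)
    (hA : A ∈ smallestLocalizing.{w} T)
    (hB : B ∈ rightOrthogonal (smallestLocalizing.{w} T))
    -- a distinguished triangle `A' → X → B' → A'⟦1⟧` with `A' ∈ τ^L` and `B' ∈ (τ^L)⊥`:
    (A' B' : 𝒯) (f' : A' ⟶ X) (g' : X ⟶ B') (h' : B' ⟶ A'⟦(1 : ℤ)⟧)
    (hdist' : Triangle.mk f' g' h' ∈ distTriang 𝒯)
    (hA' : A' ∈ smallestLocalizing.{w} (L.obj '' T))
    (hB' : B' ∈ rightOrthogonal (smallestLocalizing.{w} (L.obj '' T))) :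
    (∃ φ : A ≅ A', φ.hom ≫ f' = f) ∧ IsIso (η.app A) ∧ IsIso (η.app B) := by
  have hloc := isLocalizing_local.{w} hLlocal
  have hτ := isLocalizing_smallestLocalizing.{w} T
  have hA'loc : IsIso (η.app A') := hA' _ hloc (by
    rintro _ ⟨Y, -, rfl⟩
    exact hLlocal Y)
  have hB'loc : IsIso (η.app B') := hloc.2.2.1 _ hdist' hA'loc hX
  have hA'τ : A' ∈ smallestLocalizing.{w} T := hA' _ hτ (by
    rintro _ ⟨Y, hY, rfl⟩
    exact hclosed Y (subset_smallestLocalizing T hY))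
  have hB'τ : B' ∈ rightOrthogonal (smallestLocalizing.{w} T) := by
    intro Y hY k
    have hLY : L.obj Y ∈ smallestLocalizing.{w} (L.obj '' T) :=
      hY _ (isLocalizing_preimage L (isLocalizing_smallestLocalizing _))
        fun Z hZ => subset_smallestLocalizing _ ⟨Z, hZ, rfl⟩
    obtain ⟨k', rfl⟩ := (huniv B' Y hB'loc).2 k
    dsimp only
    rw [hB' _ hLY k', comp_zero]
  obtain ⟨φ, hφ⟩ := exists_iso_of_orthogonal hτ hdist hdist' hA hA'τ hB hB'τ
  have hAloc : IsIso (η.app A) := hloc.2.1 φ.symm hA'loc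
  exact ⟨⟨φ, hφ⟩, hAloc, hloc.2.2.1 _ hdist hAloc hX⟩
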